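/- Let n ≥ 2 and let c_n be the first positive zero of the Bessel function J_{(n−2)/2}. Then the function u(x) = |x|^{(2−n)/2} J_{(n−2)/2}(|x|) (extended appropriately at 0) is a smooth solution of Δu + u = 0 on ℝⁿ which is strictly positive on the open ball B(0, c_n) and vanishes on ∂B(0, c_n). -/

import Mathlib

open Metric Set

noncomputable section

/-- The Laplacian of a real-valued function on Euclidean space. -/
def lap {n : ℕ} (u : EuclideanSpace ℝ (Fin n) → ℝ) (x : EuclideanSpace ℝ (Fin n)) : ℝ :=
  ∑ i : Fin n, fderiv ℝ (fun y => fderiv ℝ u y (EuclideanSpace.single i 1)) x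
    (EuclideanSpace.single i 1)

/-- The Bessel function of the first kind of order `ν`, via its power series (for `x > 0`). -/
def besselJ (ν x : ℝ) : ℝ :=
  ∑' m : ℕ, ((-1 : ℝ) ^ m / (m.factorial * Real.Gamma (m + ν + 1))) *
    (x / 2) ^ (2 * m) * (x / 2) ^ ν

/-- `c_n`: the first positive zero of the Bessel function `J_{(n-2)/2}`. -/
def besselZero (n : ℕ) : ℝ :=
  sInf {t : ℝ | 0 < t ∧ besselJ (((n : ℝ) - 2) / 2) t = 0}

/-- Normalised Bessel series. -/
def bG (ν z : ℝ) : ℝ :=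
  ∑' m : ℕ, ((-1 : ℝ) ^ m / (m.factorial * Real.Gamma (m + ν + 1))) * z ^ m

lemma gamma_lower (ν : ℝ) (hν : 0 ≤ ν) (m : ℕ) :
    Real.Gamma (ν + 1) ≤ Real.Gamma (m + ν + 1) := by
  induction m with
  | zero => simp
  | succ k ih =>
    have hk : (0 : ℝ) ≤ k := Nat.cast_nonneg k
    have h1 : Real.Gamma ((k : ℝ) + ν + 1 + 1) = (k + ν + 1) * Real.Gamma (k + ν + 1) :=
      Real.Gamma_add_one (by positivity)
    have h2 : ((k + 1 : ℕ) : ℝ) + ν + 1 = (k : ℝ) + ν + 1 + 1 := by push_cast; ring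
    rw [h2, h1]
    have h3 : 0 < Real.Gamma (k + ν + 1) := Real.Gamma_pos_of_pos (by positivity)
    nlinarith

lemma coeff_bound (ν : ℝ) (hν : 0 ≤ ν) (m : ℕ) :
    |(-1 : ℝ) ^ m / (m.factorial * Real.Gamma (m + ν + 1))| ≤
      (Real.Gamma (ν + 1))⁻¹ * ((m.factorial : ℝ))⁻¹ := by
  have h0 : 0 < Real.Gamma (ν + 1) := Real.Gamma_pos_of_pos (by positivity)
  have h1 := gamma_lower ν hν m
  have hf : (0 : ℝ) < m.factorial := by exact_mod_cast m.factorial_pos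
  rw [abs_div, abs_pow, abs_neg, abs_one, one_pow, abs_of_pos (by positivity), ← mul_inv,
    one_div]
  apply inv_anti₀ (by positivity)
  rw [mul_comm]
  gcongr

lemma bG_summable (ν : ℝ) (hν : 0 ≤ ν) (z : ℝ) :
    Summable fun m : ℕ => ((-1 : ℝ) ^ m / (m.factorial * Real.Gamma (m + ν + 1))) * z ^ m := by
  have hs := (Real.summable_pow_div_factorial |z|).mul_left (Real.Gamma (ν + 1))⁻¹
  refine Summable.of_norm_bounded hs fun m => ?_
  rw [Real.norm_eq_abs, abs_mul, abs_pow]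
  calc _ ≤ ((Real.Gamma (ν + 1))⁻¹ * ((m.factorial : ℝ))⁻¹) * |z| ^ m := by
        gcongr; exact coeff_bound ν hν m
    _ = _ := by ring

lemma deriv_term (ν : ℝ) (z : ℝ) (k : ℕ) :
    ((-1 : ℝ) ^ (k + 1) / ((k + 1).factorial * Real.Gamma ((k + 1 : ℕ) + ν + 1))) *
      (((k + 1 : ℕ) : ℝ) * z ^ k) =
    -(((-1 : ℝ) ^ k / (k.factorial * Real.Gamma (k + (ν + 1) + 1))) * z ^ k) := by
  have hf : (k.factorial : ℝ) ≠ 0 := by exact_mod_cast k.factorial_ne_zero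
  have h2 : ((k + 1 : ℕ) : ℝ) + ν + 1 = (k : ℝ) + (ν + 1) + 1 := by push_cast; ring
  have hk : ((k : ℝ) + 1) ≠ 0 := by positivity
  rw [h2, Nat.factorial_succ, pow_succ]
  push_cast
  by_cases hG : Real.Gamma ((k : ℝ) + (ν + 1) + 1) = 0
  · simp [hG]
  field_simp

lemma bG_hasDerivAt (ν : ℝ) (hν : 0 ≤ ν) (z : ℝ) :
    HasDerivAt (bG ν) (-bG (ν + 1) z) z := by
  set R : ℝ := |z| + 1 with hR
  have hR0 : 0 < R := by positivity
  let g' : ℕ → ℝ → ℝ := fun m y =>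
    ((-1 : ℝ) ^ m / (m.factorial * Real.Gamma (m + ν + 1))) * ((m : ℝ) * y ^ (m - 1))
  have hu : Summable fun m : ℕ =>
      ((Real.Gamma (ν + 1))⁻¹ * ((m.factorial : ℝ))⁻¹) * ((m : ℝ) * R ^ (m - 1)) := by
    rw [← summable_nat_add_iff 1]
    refine ((Real.summable_pow_div_factorial R).mul_left (Real.Gamma (ν + 1))⁻¹).congr
      fun k => ?_
    have hf : (k.factorial : ℝ) ≠ 0 := by exact_mod_cast k.factorial_ne_zero
    have hk : ((k : ℝ) + 1) ≠ 0 := by positivity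
    rw [Nat.factorial_succ]
    push_cast
    field_simp
  have key := hasDerivAt_tsum_of_isPreconnected (t := ball (0 : ℝ) R) (y₀ := 0) (y := z)
    (g := fun (m : ℕ) y => ((-1 : ℝ) ^ m / (m.factorial * Real.Gamma (m + ν + 1))) * y ^ m)
    (g' := g') hu isOpen_ball (convex_ball _ _).isPreconnected
    (fun m y _ => (hasDerivAt_pow m y).const_mul _)
    (fun m y hy => by
      have hy' : |y| ≤ R := by simpa using (mem_ball_zero_iff.1 hy).le
      simp only [g']
      rw [Real.norm_eq_abs, abs_mul, abs_mul, abs_pow, Nat.abs_cast]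
      have := coeff_bound ν hν m
      gcongr)
    (mem_ball_self hR0) (bG_summable ν hν 0) (by simp [hR])
  have e : ∑' m, g' m z = -bG (ν + 1) z := by
    have hs : Summable fun m => g' m z := by
      rw [← summable_nat_add_iff 1]
      exact ((bG_summable (ν + 1) (by linarith) z).neg).congr fun k => (deriv_term ν z k).symm
    rw [hs.tsum_eq_zero_add, bG, ← tsum_neg]
    have : g' 0 z = 0 := by simp [g']
    rw [this, zero_add]
    exact tsum_congr fun k => deriv_term ν z k
  rw [e] at key
  exact key

lemma bG_contDiff (k : ℕ) : ∀ ν : ℝ, 0 ≤ ν → ContDiff ℝ k (bG ν) := by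
  induction k with
  | zero =>
    intro ν hν
    exact contDiff_zero.2 (continuous_iff_continuousAt.2 fun z => (bG_hasDerivAt ν hν z).continuousAt)
  | succ k ih =>
    intro ν hν
    have hd : deriv (bG ν) = fun z => -bG (ν + 1) z := funext fun z => (bG_hasDerivAt ν hν z).deriv
    push_cast
    rw [contDiff_succ_iff_deriv]
    refine ⟨fun z => (bG_hasDerivAt ν hν z).differentiableAt, by simp, ?_⟩
    rw [hd]
    exact (ih (ν + 1) (by linarith)).neg

lemma bG_rec (ν : ℝ) (hν : 0 ≤ ν) (z : ℝ) :
    bG ν z = (ν + 1) * bG (ν + 1) z - z * bG (ν + 2) z := by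
  have h1 := bG_summable (ν + 1) (by linarith) z
  have h0 := bG_summable ν hν z
  have h2 := bG_summable (ν + 2) (by linarith) z
  have hd : bG ν z - (ν + 1) * bG (ν + 1) z = - (z * bG (ν + 2) z) := by
    have hs := h0.sub (h1.mul_left (ν + 1))
    unfold bG
    rw [← tsum_mul_left, ← tsum_mul_left, ← h0.tsum_sub (h1.mul_left (ν + 1)),
      hs.tsum_eq_zero_add, ← tsum_neg]
    have z0 : ∀ k : ℕ, Real.Gamma ((k : ℝ) + (ν + 1) + 1) =
        (k + ν + 1) * Real.Gamma (k + ν + 1) := fun k => by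
      rw [show (k : ℝ) + (ν + 1) + 1 = (k + ν + 1) + 1 by ring]
      exact Real.Gamma_add_one (by positivity)
    have gp : ∀ k : ℕ, Real.Gamma ((k : ℝ) + ν + 1) ≠ 0 := fun k =>
      (Real.Gamma_pos_of_pos (by positivity)).ne'
    have e0 : (-1 : ℝ) ^ 0 / ((Nat.factorial 0) * Real.Gamma ((0 : ℕ) + ν + 1)) * z ^ 0 -
      (ν + 1) * ((-1 : ℝ) ^ 0 / ((Nat.factorial 0) * Real.Gamma ((0 : ℕ) + (ν + 1) + 1)) * z ^ 0)
        = 0 := by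
      have := gp 0
      have h3 : ν + 1 ≠ 0 := by positivity
      rw [z0 0]
      simp only [Nat.factorial_zero, Nat.cast_one, pow_zero, Nat.cast_zero, zero_add, one_mul,
        mul_one] at *
      field_simp
      ring
    rw [e0, zero_add]
    refine tsum_congr fun k => ?_
    have hf : (k.factorial : ℝ) ≠ 0 := by exact_mod_cast k.factorial_ne_zero
    have hk : ((k : ℝ) + 1) ≠ 0 := by positivity
    have hk2 : ((k : ℝ) + ν + 2) ≠ 0 := by positivity
    rw [z0 (k + 1), show (k : ℝ) + (ν + 2) + 1 = ((k + 1 : ℕ) : ℝ) + (ν + 1) + 1 by push_cast; ring,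
      z0 (k + 1)]
    have := gp (k + 1)
    generalize Real.Gamma (((k + 1 : ℕ) : ℝ) + ν + 1) = Γ at *
    rw [Nat.factorial_succ, pow_succ, pow_succ]
    push_cast
    have e : (k : ℝ) + 1 + ν + 1 = k + ν + 2 := by ring
    rw [e]
    field_simp
    ring
  linarith

lemma bG_zero_pos (ν : ℝ) (hν : 0 ≤ ν) : 0 < bG ν 0 := by
  have : bG ν 0 = (Real.Gamma (ν + 1))⁻¹ := by
    unfold bG
    rw [tsum_eq_single 0]
    · simp
    · intro m hm; simp [hm]
  rw [this]
  exact inv_pos.2 (Real.Gamma_pos_of_pos (by positivity))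

lemma bG_cont (ν : ℝ) (hν : 0 ≤ ν) : Continuous (bG ν) :=
  continuous_iff_continuousAt.2 fun z => (bG_hasDerivAt ν hν z).continuousAt

lemma bG_pos_of_no_zero (ν : ℝ) (hν : 0 ≤ ν) (b : ℝ) (hb : 0 ≤ b)
    (h : ∀ z, 0 ≤ z → z ≤ b → bG ν z ≠ 0) : 0 < bG ν b := by
  by_contra hneg
  push Not at hneg
  obtain ⟨c, hc, hc0⟩ := intermediate_value_Icc' hb (bG_cont ν hν).continuousOn
    (show (0 : ℝ) ∈ Icc (bG ν b) (bG ν 0) from ⟨hneg, (bG_zero_pos ν hν).le⟩)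
  exact h c hc.1 hc.2 hc0

lemma bG_exists_zero (ν : ℝ) (hν : 0 ≤ ν) : ∃ z, 0 < z ∧ bG ν z = 0 := by
  by_contra hno
  push Not at hno
  have pos : ∀ z, 0 ≤ z → 0 < bG ν z := fun b hb => by
    refine bG_pos_of_no_zero ν hν b hb fun z hz _ => ?_
    rcases hz.eq_or_lt with rfl | hz
    · exact (bG_zero_pos ν hν).ne'
    · exact hno z hz
  have pos1 : ∀ z, 0 < z → 0 < bG (ν + 1) z := by
    have hder : ∀ z : ℝ, 0 < z → HasDerivAt (fun z : ℝ => z ^ (ν + 1) * bG (ν + 1) z)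
        (z ^ ν * bG ν z) z := fun z hz => by
      have h1 := (Real.hasDerivAt_rpow_const (x := z) (p := ν + 1) (Or.inl hz.ne')).mul
        (bG_hasDerivAt (ν + 1) (by linarith) z)
      refine h1.congr_deriv ?_
      rw [bG_rec ν hν z, Real.rpow_add hz, Real.rpow_one,
        show ν + 1 - 1 = ν by ring, show ν + 1 + 1 = ν + 2 by ring]
      ring
    have hm : StrictMonoOn (fun z : ℝ => z ^ (ν + 1) * bG (ν + 1) z) (Ici 0) := by
      refine strictMonoOn_of_deriv_pos (convex_Ici 0) ?_ ?_
      · exact ((Real.continuous_rpow_const (by linarith)).mul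
          (bG_cont (ν + 1) (by linarith))).continuousOn
      · intro z hz
        rw [interior_Ici] at hz
        have hz' : 0 < z := hz
        rw [(hder z hz').deriv]
        have := pos z hz'.le
        positivity
    intro z hz
    have := hm (mem_Ici.2 le_rfl) (mem_Ici.2 hz.le) hz
    simp only [] at this
    rw [Real.zero_rpow (by positivity), zero_mul] at this
    exact (pos_iff_pos_of_mul_pos this).1 (by positivity)
  set S : ℝ := (ν + 1) ^ 2 with hS
  have hS0 : 0 < S := by positivity
  let h : ℝ → ℝ := fun z => bG ν z / bG (ν + 1) z + z / 2
  have hh : ∀ z, 0 < z → HasDerivAt h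
      (((-bG (ν + 1) z) * bG (ν + 1) z - bG ν z * (-bG (ν + 1 + 1) z)) / bG (ν + 1) z ^ 2 + 1 / 2) z :=
    fun z hz => ((bG_hasDerivAt ν hν z).div (bG_hasDerivAt (ν + 1) (by linarith) z)
      (pos1 z hz).ne').add ((hasDerivAt_id z).div_const 2)
  have anti : AntitoneOn h (Ici S) := by
    refine antitoneOn_of_deriv_nonpos (convex_Ici S) ?_ ?_ ?_
    · exact fun z hz => (hh z (hS0.trans_le hz)).continuousAt.continuousWithinAt
    · intro z hz
      rw [interior_Ici] at hz
      exact (hh z (hS0.trans hz)).differentiableAt.differentiableWithinAt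
    · intro z hz
      rw [interior_Ici] at hz
      have hz' : S < z := hz
      have hz0 : 0 < z := hS0.trans hz'
      rw [(hh z hz0).deriv]
      have hr := bG_rec ν hν z
      rw [show ν + 1 + 1 = ν + 2 by ring]
      have p1 := pos1 z hz0
      have p0 := pos z hz0.le
      generalize bG ν z = A at *
      generalize bG (ν + 1) z = B at *
      generalize bG (ν + 2) z = C at *
      have hC : C = ((ν + 1) * B - A) / z := by field_simp; linarith
      have hAC : A * C ≤ B ^ 2 / 4 := by
        rw [hC, mul_div_assoc', div_le_iff₀ hz0]
        nlinarith [sq_nonneg (A - (ν + 1) * B / 2), mul_pos p1 p1]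
      have : ((-B) * B - A * (-C)) / B ^ 2 ≤ -(1 / 2) := by
        rw [div_le_iff₀ (by positivity)]
        nlinarith [mul_pos p1 p1]
      linarith
  have hSp : 0 < bG ν S / bG (ν + 1) S := div_pos (pos S hS0.le) (pos1 S hS0)
  set T := S + 2 * (bG ν S / bG (ν + 1) S) with hT
  have hST : S ≤ T := by linarith
  have hTp : 0 < bG ν T / bG (ν + 1) T :=
    div_pos (pos T (hS0.le.trans hST)) (pos1 T (hS0.trans_le hST))
  have := anti (mem_Ici.2 le_rfl) (mem_Ici.2 hST) hST
  simp only [h] at this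
  linarith

lemma besselJ_eq (ν t : ℝ) : besselJ ν t = bG ν (t ^ 2 / 4) * (t / 2) ^ ν := by
  unfold besselJ bG
  rw [tsum_mul_right]
  congr 1
  refine tsum_congr fun m => ?_
  rw [pow_mul, div_pow]
  norm_num

lemma besselZero_spec (n : ℕ) (hn : 2 ≤ n) :
    0 < besselZero n ∧ bG (((n : ℝ) - 2) / 2) (besselZero n ^ 2 / 4) = 0 ∧
      ∀ t, 0 ≤ t → t < besselZero n → 0 < bG (((n : ℝ) - 2) / 2) (t ^ 2 / 4) := by
  have hν : 0 ≤ ((n : ℝ) - 2) / 2 := by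
    have : (2 : ℝ) ≤ n := by exact_mod_cast hn
    linarith
  unfold besselZero
  generalize ((n : ℝ) - 2) / 2 = ν at *
  set Z := {t : ℝ | 0 < t ∧ besselJ ν t = 0} with hZ
  have hZ' : Z = {t : ℝ | 0 ≤ t ∧ bG ν (t ^ 2 / 4) = 0} := by
    ext t
    simp only [hZ, mem_ofPred_eq, besselJ_eq]
    constructor
    · rintro ⟨h1, h2⟩
      refine ⟨h1.le, (mul_eq_zero.1 h2).resolve_right ?_⟩
      positivity
    · rintro ⟨h1, h2⟩
      refine ⟨lt_of_le_of_ne h1 ?_, by rw [h2, zero_mul]⟩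
      rintro rfl
      have := bG_zero_pos ν hν
      norm_num at h2
      linarith
  have hcl : IsClosed Z := by
    rw [hZ']
    have hc := bG_cont ν hν
    exact (isClosed_le continuous_const continuous_id).inter
      (isClosed_eq (hc.comp (by fun_prop)) continuous_const)
  have hne : Z.Nonempty := by
    obtain ⟨z, hz, h0⟩ := bG_exists_zero ν hν
    refine ⟨2 * √z, ?_⟩
    rw [hZ']
    refine ⟨by positivity, ?_⟩
    rw [mul_pow, Real.sq_sqrt hz.le]
    convert h0 using 2
    ring
  have hbd : BddBelow Z := ⟨0, fun t ht => ht.1.le⟩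
  have hmem := hcl.csInf_mem hne hbd
  refine ⟨hmem.1, (hZ' ▸ hmem : sInf Z ∈ {t : ℝ | 0 ≤ t ∧ bG ν (t ^ 2 / 4) = 0}).2, ?_⟩
  intro t ht htc
  refine bG_pos_of_no_zero ν hν _ (by positivity) fun z hz hzt h0 => ?_
  have hz' : 2 * √z ∈ Z := by
    rw [hZ']
    refine ⟨by positivity, ?_⟩
    rw [mul_pow, Real.sq_sqrt hz]
    convert h0 using 2
    ring
  have h1 := csInf_le hbd hz'
  have h2 : √z ≤ t / 2 := Real.sqrt_le_iff.2 ⟨by positivity, by linarith [div_pow t 2 2]⟩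
  linarith

lemma fderiv_radial (n : ℕ) (ν : ℝ) (hν : 0 ≤ ν) (x : EuclideanSpace ℝ (Fin n)) :
    HasFDerivAt (fun y : EuclideanSpace ℝ (Fin n) => bG ν (‖y‖ ^ 2 / 4))
      ((-bG (ν + 1) (‖x‖ ^ 2 / 4)) • ((1 / 2 : ℝ) • innerSL ℝ x)) x := by
  have h1 : HasFDerivAt (fun y : EuclideanSpace ℝ (Fin n) => ‖y‖ ^ 2 / 4)
      ((1 / 2 : ℝ) • innerSL ℝ x) x := by
    have h := ((hasStrictFDerivAt_norm_sq x).hasFDerivAt).const_mul (1 / 4 : ℝ)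
    refine (h.congr_fderiv ?_).congr_of_eventuallyEq (Filter.Eventually.of_forall fun y => ?_)
    · ext v
      simp
      ring
    · simp only []
      ring
  exact (bG_hasDerivAt ν hν _).comp_hasFDerivAt x h1

lemma lap_radial (n : ℕ) (ν : ℝ) (hν : 0 ≤ ν) (hn : (n : ℝ) = 2 * (ν + 1)) (K : ℝ)
    (x : EuclideanSpace ℝ (Fin n)) :
    lap (fun y : EuclideanSpace ℝ (Fin n) => K * bG ν (‖y‖ ^ 2 / 4)) x =
      -(K * bG ν (‖x‖ ^ 2 / 4)) := by
  unfold lap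
  have h1 : ∀ i : Fin n, (fun y : EuclideanSpace ℝ (Fin n) => fderiv ℝ
      (fun y : EuclideanSpace ℝ (Fin n) => K * bG ν (‖y‖ ^ 2 / 4)) y (EuclideanSpace.single i 1)) =
      fun y => (-K / 2) * (bG (ν + 1) (‖y‖ ^ 2 / 4) * y i) := fun i => by
    funext y
    rw [((fderiv_radial n ν hν y).const_mul K).fderiv]
    simp [EuclideanSpace.inner_single_right]
    ring
  have h2 : ∀ i : Fin n, fderiv ℝ (fun y : EuclideanSpace ℝ (Fin n) =>
      (-K / 2) * (bG (ν + 1) (‖y‖ ^ 2 / 4) * y i)) x (EuclideanSpace.single i 1) =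
      (K / 4) * bG (ν + 2) (‖x‖ ^ 2 / 4) * (x i) ^ 2 - K / 2 * bG (ν + 1) (‖x‖ ^ 2 / 4) := fun i => by
    have hp : HasFDerivAt (fun y : EuclideanSpace ℝ (Fin n) => y i)
        (EuclideanSpace.proj i : EuclideanSpace ℝ (Fin n) →L[ℝ] ℝ) x :=
      (EuclideanSpace.proj i : EuclideanSpace ℝ (Fin n) →L[ℝ] ℝ).hasFDerivAt
    have hd := (((fderiv_radial n (ν + 1) (by linarith) x).mul hp).const_mul (-K / 2)).fderiv
    simp only [Pi.mul_apply] at hd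
    rw [hd]
    rw [show ν + 1 + 1 = ν + 2 by ring]
    simp [EuclideanSpace.inner_single_right]
    ring
  simp_rw [h1, h2]
  rw [Finset.sum_sub_distrib, ← Finset.mul_sum, ← EuclideanSpace.real_norm_sq_eq]
  rw [Finset.sum_const, Finset.card_univ, Fintype.card_fin, nsmul_eq_mul, hn, bG_rec ν hν]
  ring

/-- the radial function `u(x) = |x|^{(2−n)/2} J_{(n−2)/2}(|x|)`, extended
appropriately at the origin, is a smooth solution of `Δu + u = 0` on `ℝⁿ`, strictly positive
on the open ball `B(0, c_n)` and vanishing on its boundary sphere. -/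
theorem radial_bessel_solution (n : ℕ) (hn : 2 ≤ n) :
    ∃ u : EuclideanSpace ℝ (Fin n) → ℝ,
      ContDiff ℝ (⊤ : ℕ∞) u ∧
      (∀ x : EuclideanSpace ℝ (Fin n), x ≠ 0 →
        u x = ‖x‖ ^ (((2 : ℝ) - n) / 2) * besselJ (((n : ℝ) - 2) / 2) ‖x‖) ∧
      (∀ x, lap u x + u x = 0) ∧
      (∀ x ∈ ball (0 : EuclideanSpace ℝ (Fin n)) (besselZero n), 0 < u x) ∧
      (∀ x ∈ sphere (0 : EuclideanSpace ℝ (Fin n)) (besselZero n), u x = 0) := by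
  have hν : 0 ≤ ((n : ℝ) - 2) / 2 := by
    have : (2 : ℝ) ≤ n := by exact_mod_cast hn
    linarith
  obtain ⟨hc0, hcz, hcp⟩ := besselZero_spec n hn
  have hK : (0 : ℝ) < (1 / 2 : ℝ) ^ (((n : ℝ) - 2) / 2) := by positivity
  refine ⟨fun y => (1 / 2 : ℝ) ^ (((n : ℝ) - 2) / 2) * bG (((n : ℝ) - 2) / 2) (‖y‖ ^ 2 / 4),
    ?_, ?_, ?_, ?_, ?_⟩
  · have h1 : ContDiff ℝ (⊤ : ℕ∞) (bG (((n : ℝ) - 2) / 2)) :=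
      contDiff_infty.2 fun k => bG_contDiff k _ hν
    exact contDiff_const.mul (h1.comp ((contDiff_norm_sq ℝ).div_const 4))
  · intro x hx
    have hx' : 0 < ‖x‖ := norm_pos_iff.2 hx
    rw [besselJ_eq, div_eq_mul_one_div ‖x‖ 2, Real.mul_rpow hx'.le (by norm_num),
      show ((2 : ℝ) - n) / 2 = -(((n : ℝ) - 2) / 2) by ring, Real.rpow_neg hx'.le]
    have : ‖x‖ ^ (((n : ℝ) - 2) / 2) ≠ 0 := by positivity
    field_simp
  · intro x
    rw [lap_radial n _ hν (by ring)]
    simp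
  · intro x hx
    exact mul_pos hK (hcp _ (norm_nonneg x) (mem_ball_zero_iff.1 hx))
  · intro x hx
    simp only [mem_sphere_zero_iff_norm.1 hx, hcz, mul_zero]
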